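/- In the generalized restricted game RL^K(X,Y;v), for every α ∈ Δ with all coordinates strictly positive and every δ ∈ [0,1], the max-min value of player X satisfies sup_{F_X ∈ 𝔽(X)} inf_{F_Y ∈ 𝔽^K(Y)} π_X(F_X,F_Y) ≥ 1 − max_{S ⊆ {1,…,C}, |S| = K} H_S(α,δ), where H_S(α,δ) := (Σ_{c∈S} v_c)·(1−δ) + δ²·(Y/(2X))·max_{c∈S} (v_c/α_c). -/

import Mathlib

open MeasureTheory Finset

noncomputable section

/-- Admissible strategies for a player with budget `B`: Borel probability measures on `ℝ^C`
supported (i.e. concentrated, with full measure) on the nonnegative orthant, whose expected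
total allocation is at most `B`. -/
def Strat (C : ℕ) (B : ℝ) : Set (Measure (Fin C → ℝ)) :=
  {μ | IsProbabilityMeasure μ ∧ μ {x | ∀ c, 0 ≤ x c} = 1 ∧
    ∫⁻ x, ENNReal.ofReal (∑ c, x c) ∂μ ≤ ENNReal.ofReal B}

/-- Expected payoff to player `X`: `E[Σ_c v_c · 1{x_c ≥ y_c}]`. -/
def payoff (C : ℕ) (v : Fin C → ℝ) (F G : Measure (Fin C → ℝ)) : ℝ :=
  ∫ x, (∫ y, (∑ c, if y c ≤ x c then v c else 0) ∂G) ∂F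

/-- Nonnegative allocations with at most `K` positive coordinates. -/
def RK (C K : ℕ) : Set (Fin C → ℝ) :=
  {y | (∀ c, 0 ≤ y c) ∧ {c : Fin C | 0 < y c}.ncard ≤ K}

/-- Restricted strategies: admissible strategies concentrated on `R^K`. -/
def StratK (C K : ℕ) (B : ℝ) : Set (Measure (Fin C → ℝ)) :=
  {μ | μ ∈ Strat C B ∧ μ (RK C K) = 1}

/-!
Player X draws one uniform `θ ∈ [0, 1]` and bids `max (θ v_c - a_c) 0 / B` in every contest `c`.
A bid `y_c > 0` of player Y then wins `c` with probability at most `(a_c + B y_c) / v_c`, so Y's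
expected gain is at most `∑_{c : y_c > 0} a_c + B ∑_c y_c`. The slope `B` is the same in all
contests, so nothing is gained by mixing over supports, and optimizing `B` against the budget of X
bounds Y's value by `max_{|S| ≤ K} ∑_{c ∈ S} a_c + Y / (2X) * ∑_c (v_c - a_c)² / v_c`.

It remains to choose the thresholds `a`. Let `T` consist of the `K - 1` most valuable contests. The
inequalities `H_{T ∪ {c}} ≤ max_S H_S` bound each `α_c` from below, and `∑_c α_c = 1` turns them
into the required bound for `a_c = (1 - δ) v_c` on `T` and `a_c = min ((1 - δ) m) v_c` off `T`,
with a suitable common level `m`.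
-/

section Score

variable {C : ℕ} {v : Fin C → ℝ}

/-- The realized payoff of player X in the game with contest values `v` when the players bid `x`
and `y`; ties go to X. The expected payoff `payoff` is its integral over both strategies. -/
def score (v x y : Fin C → ℝ) : ℝ := ∑ c, if y c ≤ x c then v c else 0

lemma score_nonneg (hv : ∀ c, 0 ≤ v c) (x y : Fin C → ℝ) : 0 ≤ score v x y :=
  sum_nonneg fun c _ => by split_ifs <;> simp [hv c]

lemma score_le_sum (hv : ∀ c, 0 ≤ v c) (x y : Fin C → ℝ) : score v x y ≤ ∑ c, v c :=
  sum_le_sum fun c _ => by split_ifs <;> simp [hv c]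

lemma measurable_score (v : Fin C → ℝ) :
    Measurable fun p : (Fin C → ℝ) × (Fin C → ℝ) => score v p.1 p.2 :=
  measurable_sum _ fun _ _ =>
    .ite (measurableSet_le (by fun_prop) (by fun_prop)) measurable_const measurable_const

lemma integrable_score (hv : ∀ c, 0 ≤ v c) (μ : Measure ((Fin C → ℝ) × (Fin C → ℝ)))
    [IsFiniteMeasure μ] : Integrable (fun p => score v p.1 p.2) μ :=
  .of_mem_Icc 0 (∑ c, v c) (measurable_score v).aemeasurable
    (.of_forall fun p => ⟨score_nonneg hv p.1 p.2, score_le_sum hv p.1 p.2⟩)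

lemma integral_score_eq_sum (v : Fin C → ℝ) (F : Measure (Fin C → ℝ)) [IsFiniteMeasure F]
    (y : Fin C → ℝ) : ∫ x, score v x y ∂F = ∑ c, F.real {x | y c ≤ x c} * v c := by
  have hmeas (c : Fin C) : MeasurableSet {x : Fin C → ℝ | y c ≤ x c} :=
    measurableSet_le measurable_const (measurable_pi_apply c)
  have hscore (x : Fin C → ℝ) :
      score v x y = ∑ c, {x : Fin C → ℝ | y c ≤ x c}.indicator (fun _ => v c) x := by
    simp only [score, Set.indicator_apply, Set.mem_ofPred_eq]
  simp only [hscore]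
  rw [integral_finsetSum _ fun c _ => (integrable_const (v c)).indicator (hmeas c)]
  exact sum_congr rfl fun c _ => by rw [integral_indicator_const _ (hmeas c), smul_eq_mul]

lemma payoff_eq_integral_sum (hv : ∀ c, 0 ≤ v c) (F G : Measure (Fin C → ℝ))
    [IsFiniteMeasure F] [IsFiniteMeasure G] :
    payoff C v F G = ∫ y, ∑ c, F.real {x | y c ≤ x c} * v c ∂G := by
  simp only [← integral_score_eq_sum]
  exact integral_integral_swap (f := score v) (integrable_score hv (F.prod G))

lemma payoff_nonneg (hv : ∀ c, 0 ≤ v c) (F G : Measure (Fin C → ℝ)) : 0 ≤ payoff C v F G :=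
  integral_nonneg fun x => integral_nonneg fun y => score_nonneg hv x y

lemma payoff_le_sum (hv : ∀ c, 0 ≤ v c) (F G : Measure (Fin C → ℝ)) [IsProbabilityMeasure F]
    [IsProbabilityMeasure G] : payoff C v F G ≤ ∑ c, v c := by
  have hbound : ∀ᵐ p ∂F.prod G, score v p.1 p.2 ≤ ∑ c, v c :=
    .of_forall fun p => score_le_sum hv p.1 p.2
  calc payoff C v F G = ∫ p, score v p.1 p.2 ∂F.prod G :=
        (integral_prod _ (integrable_score hv _)).symm
    _ ≤ ∫ _, ∑ c, v c ∂F.prod G :=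
        integral_mono_ae (integrable_score hv _) (integrable_const _) hbound
    _ = ∑ c, v c := by simp

end Score

section RestrictedStrategies

variable {C K : ℕ} {v : Fin C → ℝ}

lemma mem_RK_iff_exists_finset {y : Fin C → ℝ} :
    y ∈ RK C K ↔ (∀ c, 0 ≤ y c) ∧ ∃ T : Finset (Fin C), #T ≤ K ∧ ∀ c ∉ T, y c ≤ 0 := by
  refine and_congr_right fun _ => ⟨fun h => ⟨univ.filter (0 < y ·), ?_, by simp⟩, ?_⟩
  · rwa [← Set.ncard_coe_finset, coe_filter_univ]
  · rintro ⟨T, hT, hy⟩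
    have hsub : {c | 0 < y c} ⊆ (T : Set (Fin C)) := fun c hc =>
      by_contra fun hcT => (hy c hcT).not_gt hc
    exact (Set.ncard_le_ncard hsub).trans ((Set.ncard_coe_finset T).trans_le hT)

lemma measurableSet_RK (C K : ℕ) : MeasurableSet (RK C K) := by
  have hset : RK C K = {y | (∀ c, 0 ≤ y c) ∧ ∃ T : Finset (Fin C), #T ≤ K ∧ ∀ c ∉ T, y c ≤ 0} :=
    Set.ext fun _ => mem_RK_iff_exists_finset
  rw [hset]
  measurability

lemma dirac_zero_mem_StratK (C K : ℕ) (Y : ℝ) :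
    Measure.dirac (0 : Fin C → ℝ) ∈ StratK C K Y := by
  refine ⟨⟨inferInstance, ?_, ?_⟩, ?_⟩
  · rw [Measure.dirac_apply_of_mem]; simp
  · rw [lintegral_dirac]; simp
  · rw [Measure.dirac_apply_of_mem]; simp [RK]

lemma integrable_sum_and_integral_le_of_mem_Strat {Y : ℝ} (hY : 0 ≤ Y)
    {G : Measure (Fin C → ℝ)} (hG : G ∈ Strat C Y) :
    Integrable (fun y => ∑ c, y c) G ∧ ∫ y, ∑ c, y c ∂G ≤ Y := by
  obtain ⟨hprob, horthant, hbudget⟩ := hG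
  have hmeas : MeasurableSet {y : Fin C → ℝ | ∀ c, 0 ≤ y c} := by measurability
  have hnonneg : 0 ≤ᵐ[G] fun y => ∑ c, y c := by
    filter_upwards [(mem_ae_iff_prob_eq_one hmeas).2 horthant] with y hy
    exact sum_nonneg fun c _ => hy c
  have hint : Integrable (fun y : Fin C → ℝ => ∑ c, y c) G :=
    ⟨by fun_prop, (hasFiniteIntegral_iff_ofReal hnonneg).2 (hbudget.trans_lt ENNReal.ofReal_lt_top)⟩
  rw [← ofReal_integral_eq_lintegral_ofReal hint hnonneg] at hbudget
  exact ⟨hint, (ENNReal.ofReal_le_ofReal_iff hY).1 hbudget⟩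

lemma le_payoff_of_forall_mem_RK (hv : ∀ c, 0 ≤ v c) {B L Y : ℝ} (hB : 0 ≤ B) (hY : 0 ≤ Y)
    {F G : Measure (Fin C → ℝ)} [IsFiniteMeasure F] (hG : G ∈ StratK C K Y)
    (hL : ∀ y ∈ RK C K, L - B * ∑ c, y c ≤ ∑ c, F.real {x | y c ≤ x c} * v c) :
    L - B * Y ≤ payoff C v F G := by
  obtain ⟨hGY, hGK⟩ := hG
  have := hGY.1
  obtain ⟨hint, hbudget⟩ := integrable_sum_and_integral_le_of_mem_Strat hY hGY
  have hwin : Integrable (fun y => ∑ c, F.real {x | y c ≤ x c} * v c) G := by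
    simpa only [integral_score_eq_sum]
      using (integrable_score hv (F.prod G)).integral_prod_right
  calc L - B * Y ≤ L - B * ∫ y, ∑ c, y c ∂G := by gcongr
    _ = ∫ y, (L - B * ∑ c, y c) ∂G := by
        rw [integral_sub (integrable_const L) (hint.const_mul B), integral_const_mul]
        simp
    _ ≤ ∫ y, ∑ c, F.real {x | y c ≤ x c} * v c ∂G := by
        refine integral_mono_ae ((integrable_const L).sub (hint.const_mul B)) hwin ?_
        filter_upwards [(mem_ae_iff_prob_eq_one (measurableSet_RK C K)).2 hGK] with y hy
        exact hL y hy
    _ = payoff C v F G := (payoff_eq_integral_sum hv F G).symm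

/-- The max-min value of player X in the game `RL^K(X, Y; v)`. -/
def maxminValue (K : ℕ) (v : Fin C → ℝ) (X Y : ℝ) : ℝ :=
  ⨆ F : Strat C X, ⨅ G : StratK C K Y, payoff C v F.1 G.1

lemma le_maxminValue (hv : ∀ c, 0 ≤ v c) {L X Y : ℝ} {F : Measure (Fin C → ℝ)}
    (hF : F ∈ Strat C X) (hL : ∀ G ∈ StratK C K Y, L ≤ payoff C v F G) :
    L ≤ maxminValue K v X Y := by
  let G₀ : StratK C K Y := ⟨_, dirac_zero_mem_StratK C K Y⟩
  have : Nonempty (StratK C K Y) := ⟨G₀⟩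
  have hbelow (F : Strat C X) :
      BddBelow (Set.range fun G : StratK C K Y => payoff C v F.1 G.1) :=
    ⟨0, Set.forall_mem_range.2 fun G => payoff_nonneg hv F.1 G.1⟩
  have habove :
      BddAbove (Set.range fun F : Strat C X => ⨅ G : StratK C K Y, payoff C v F.1 G.1) := by
    refine ⟨∑ c, v c, Set.forall_mem_range.2 fun F => ciInf_le_of_le (hbelow F) G₀ ?_⟩
    have := F.2.1
    have := G₀.2.1.1
    exact payoff_le_sum hv F.1 G₀.1
  exact le_ciSup_of_le habove ⟨F, hF⟩ (le_ciInf fun G => hL G.1 G.2)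

end RestrictedStrategies

section Ramp

/-- The bid in a contest of value `v` as a function of a uniform `θ ∈ [0, 1]`: it is zero up to
`θ = a / v` and increases with slope `v / B` from there on. -/
def ramp (v a B θ : ℝ) : ℝ := max (θ * v - a) 0 / B

variable {v a B : ℝ}

lemma continuous_ramp (v a B : ℝ) : Continuous (ramp v a B) := by
  unfold ramp
  fun_prop

lemma ramp_nonneg (hB : 0 ≤ B) (θ : ℝ) : 0 ≤ ramp v a B θ :=
  div_nonneg (le_max_right _ _) hB

lemma integral_max_mul_sub_zero (hv : 0 < v) (ha : 0 ≤ a) (hav : a ≤ v) :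
    ∫ θ in (0 : ℝ)..1, max (θ * v - a) 0 = (v - a) ^ 2 / (2 * v) := by
  have hcont : Continuous fun θ : ℝ => max (θ * v - a) 0 := by fun_prop
  have hzero : ∫ θ in (0 : ℝ)..(a / v), max (θ * v - a) 0 = ∫ _ in (0 : ℝ)..(a / v), (0 : ℝ) := by
    refine intervalIntegral.integral_congr fun θ hθ => max_eq_right ?_
    rw [Set.uIcc_of_le (by positivity)] at hθ
    linarith [(le_div_iff₀ hv).1 hθ.2]
  have hlinear : ∫ θ in (a / v)..1, max (θ * v - a) 0 = ∫ θ in (a / v)..1, (θ * v - a) := by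
    refine intervalIntegral.integral_congr fun θ hθ => max_eq_left ?_
    rw [Set.uIcc_of_le ((div_le_one hv).2 hav)] at hθ
    linarith [(div_le_iff₀ hv).1 hθ.1]
  rw [← intervalIntegral.integral_add_adjacent_intervals (b := a / v)
    (hcont.intervalIntegrable _ _) (hcont.intervalIntegrable _ _), hzero, hlinear,
    intervalIntegral.integral_sub (Continuous.intervalIntegrable (by fun_prop) _ _)
      intervalIntegrable_const, intervalIntegral.integral_mul_const, integral_id]
  simp only [intervalIntegral.integral_const, smul_eq_mul]
  field_simp
  ring

lemma setIntegral_ramp (hv : 0 < v) (ha : 0 ≤ a) (hav : a ≤ v) :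
    ∫ θ in Set.Icc (0 : ℝ) 1, ramp v a B θ = (v - a) ^ 2 / (2 * v) / B := by
  simp only [ramp]
  rw [integral_div, integral_Icc_eq_integral_Ioc, ← intervalIntegral.integral_of_le zero_le_one,
    integral_max_mul_sub_zero hv ha hav]

lemma sub_le_measureReal_le_ramp_mul (hv : 0 < v) (ha : 0 ≤ a) (hB : 0 < B) {y : ℝ}
    (hy : 0 ≤ y) :
    v - a - B * y ≤ (volume.restrict (Set.Icc (0 : ℝ) 1)).real {θ | y ≤ ramp v a B θ} * v := by
  let s := (a + B * y) / v
  have hs : 0 ≤ s := by positivity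
  have hsub : Set.Icc s 1 ⊆ {θ | y ≤ ramp v a B θ} := fun θ hθ => by
    refine (le_div_iff₀ hB).2 (le_max_of_le_left ?_)
    linarith [(div_le_iff₀ hv).1 hθ.1]
  calc v - a - B * y = (1 - s) * v := by simp only [s]; field_simp; ring
    _ ≤ (volume.restrict (Set.Icc (0 : ℝ) 1)).real (Set.Icc s 1) * v := by
        gcongr
        rw [measureReal_restrict_apply measurableSet_Icc, Set.Icc_inter_Icc, max_eq_left hs,
          min_self, Real.volume_real_Icc]
        exact le_max_left _ _
    _ ≤ _ := by gcongr; exact measure_ne_top _ _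

end Ramp

section RampStrategy

variable {C K : ℕ} {v a : Fin C → ℝ} {A B X Y : ℝ}

/-- The strategy of player X that bids along the ramps with thresholds `a` and the common
parameter `B`, using the same uniform `θ ∈ [0, 1]` in every contest. -/
def rampStrategy (v a : Fin C → ℝ) (B : ℝ) : Measure (Fin C → ℝ) :=
  (volume.restrict (Set.Icc (0 : ℝ) 1)).map fun θ c => ramp (v c) (a c) B θ

lemma measurable_ramp_pi (v a : Fin C → ℝ) (B : ℝ) :
    Measurable fun θ c => ramp (v c) (a c) B θ :=
  measurable_pi_lambda _ fun c => (continuous_ramp (v c) (a c) B).measurable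

instance isProbabilityMeasure_rampStrategy : IsProbabilityMeasure (rampStrategy v a B) :=
  have : IsProbabilityMeasure (volume.restrict (Set.Icc (0 : ℝ) 1)) := ⟨by simp⟩
  Measure.isProbabilityMeasure_map (measurable_ramp_pi v a B).aemeasurable

lemma rampStrategy_real_setOf_le (y : ℝ) (c : Fin C) :
    (rampStrategy v a B).real {x | y ≤ x c} =
      (volume.restrict (Set.Icc (0 : ℝ) 1)).real {θ | y ≤ ramp (v c) (a c) B θ} :=
  map_measureReal_apply (measurable_ramp_pi v a B)
    (measurableSet_le measurable_const (measurable_pi_apply c))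

lemma rampStrategy_mem_Strat (hv : ∀ c, 0 < v c) (ha : ∀ c, 0 ≤ a c) (hav : ∀ c, a c ≤ v c)
    (hB : 0 < B) (hX : ∑ c, (v c - a c) ^ 2 / (2 * v c) ≤ X * B) :
    rampStrategy v a B ∈ Strat C X := by
  have hmeas := measurable_ramp_pi v a B
  have hnonneg (θ : ℝ) (c : Fin C) : 0 ≤ ramp (v c) (a c) B θ := ramp_nonneg hB.le θ
  have hint (c : Fin C) : IntegrableOn (ramp (v c) (a c) B) (Set.Icc 0 1) :=
    (continuous_ramp _ _ _).integrableOn_Icc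
  have horthant : MeasurableSet {x : Fin C → ℝ | ∀ c, 0 ≤ x c} := by measurability
  refine ⟨inferInstance, ?_, ?_⟩
  · rw [rampStrategy, Measure.map_apply hmeas horthant]
    simp [hnonneg]
  · rw [rampStrategy, lintegral_map (by fun_prop) hmeas,
      ← ofReal_integral_eq_lintegral_ofReal (integrable_finsetSum _ fun c _ => hint c)
        (.of_forall fun θ => sum_nonneg fun c _ => hnonneg θ c),
      integral_finsetSum _ fun c _ => hint c]
    simp only [setIntegral_ramp (hv _) (ha _) (hav _), ← sum_div]
    exact ENNReal.ofReal_le_ofReal ((div_le_iff₀ hB).2 hX)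

lemma le_payoff_rampStrategy (hv : ∀ c, 0 < v c) (ha : ∀ c, 0 ≤ a c) (hB : 0 < B) (hY : 0 ≤ Y)
    (hA : ∀ S : Finset (Fin C), #S ≤ K → ∑ c ∈ S, a c ≤ A) {G : Measure (Fin C → ℝ)}
    (hG : G ∈ StratK C K Y) :
    ∑ c, v c - A - B * Y ≤ payoff C v (rampStrategy v a B) G := by
  refine le_payoff_of_forall_mem_RK (fun c => (hv c).le) hB.le hY hG fun y hy => ?_
  have hcontest (c : Fin C) : v c - (if 0 < y c then a c else 0) - B * y c ≤
      (rampStrategy v a B).real {x | y c ≤ x c} * v c := by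
    rw [rampStrategy_real_setOf_le]
    rcases (hy.1 c).eq_or_lt with hyc | hyc
    · simp [← hyc, ramp_nonneg hB.le]
    · rw [if_pos hyc]
      exact sub_le_measureReal_le_ramp_mul (hv c) (ha c) hB hyc.le
  have hsupport : #{c | 0 < y c} ≤ K := by
    rw [← Set.ncard_coe_finset, coe_filter_univ]
    exact hy.2
  calc ∑ c, v c - A - B * ∑ c, y c
      ≤ ∑ c, v c - ∑ c with 0 < y c, a c - B * ∑ c, y c := by gcongr; exact hA _ hsupport
    _ = ∑ c, (v c - (if 0 < y c then a c else 0) - B * y c) := by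
        rw [sum_sub_distrib, sum_sub_distrib, mul_sum, sum_filter]
    _ ≤ _ := sum_le_sum fun c _ => hcontest c

lemma sub_add_sum_sq_le_maxminValue (hv : ∀ c, 0 < v c) (ha : ∀ c, 0 ≤ a c)
    (hav : ∀ c, a c ≤ v c) (hX : 0 < X) (hY : 0 ≤ Y)
    (hA : ∀ S : Finset (Fin C), #S ≤ K → ∑ c ∈ S, a c ≤ A) :
    ∑ c, v c - (A + Y / (2 * X) * ∑ c, (v c - a c) ^ 2 / v c) ≤ maxminValue K v X Y := by
  let B₀ := (∑ c, (v c - a c) ^ 2 / v c) / (2 * X)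
  have hB₀ : 0 ≤ B₀ :=
    div_nonneg (sum_nonneg fun c _ => div_nonneg (sq_nonneg _) (hv c).le) (by positivity)
  -- `B = B₀` exhausts the budget exactly, but it vanishes when `a = v`.
  have hramp (B : ℝ) (hB : B₀ < B) : ∑ c, v c - A - B * Y ≤ maxminValue K v X Y := by
    have hbudget : ∑ c, (v c - a c) ^ 2 / (2 * v c) ≤ X * B := by
      have h := (div_lt_iff₀ (by positivity)).1 hB
      simp only [mul_comm (2 : ℝ), ← div_div, ← sum_div]
      linarith
    exact le_maxminValue (fun c => (hv c).le)
      (rampStrategy_mem_Strat hv ha hav (hB₀.trans_lt hB) hbudget)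
      fun G hG => le_payoff_rampStrategy hv ha (hB₀.trans_lt hB) hY hA hG
  have hlim : ∑ c, v c - A - B₀ * Y ≤ maxminValue K v X Y := by
    have hcont : Continuous fun B => ∑ c, v c - A - B * Y := by fun_prop
    refine le_of_tendsto (hcont.continuousWithinAt (s := Set.Ioi B₀) (x := B₀)) ?_
    filter_upwards [self_mem_nhdsWithin] with B hB using hramp B hB
  calc _ = ∑ c, v c - A - B₀ * Y := by simp only [B₀]; ring
    _ ≤ _ := hlim

end RampStrategy

section TopSets

variable {ι : Type*}

lemma exists_finset_card_eq_forall_le [Fintype ι] {R : Type*} [LinearOrder R] (f : ι → R) {k : ℕ}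
    (hk : k < Fintype.card ι) :
    ∃ T : Finset ι, #T = k ∧ ∃ i ∉ T, (∀ j ∈ T, f i ≤ f j) ∧ ∀ j ∉ T, f j ≤ f i := by
  classical
  induction k with
  | zero =>
    have : Nonempty ι := Fintype.card_pos_iff.1 hk
    obtain ⟨i, hi⟩ := Finite.exists_max f
    exact ⟨∅, card_empty, i, notMem_empty i, by simp, fun j _ => hi j⟩
  | succ k ih =>
    obtain ⟨T, hT, i, hiT, hin, hout⟩ := ih (by omega)
    have hcard : #(insert i T) = k + 1 := by rw [card_insert_of_notMem hiT, hT]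
    have hne : (insert i T)ᶜ.Nonempty := by rw [← card_pos, card_compl]; omega
    obtain ⟨i', hi', hmax⟩ := exists_max_image _ f hne
    simp only [mem_compl, mem_insert, not_or] at hi' hmax
    refine ⟨insert i T, hcard, i', by simpa using hi', (forall_mem_insert ..).2 ⟨?_, ?_⟩, ?_⟩
    · exact hout i' hi'.2
    · exact fun j hj => (hout i' hi'.2).trans (hin j hj)
    · exact fun j hj => hmax j (by simpa using hj)

lemma sum_le_sum_add_of_card_le {a : ι → ℝ} {t : ℝ} {S T : Finset ι} (ht : 0 ≤ t)
    (hin : ∀ c ∈ T, t ≤ a c) (hout : ∀ c ∉ T, a c ≤ t) (hcard : #S ≤ #T + 1) :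
    ∑ c ∈ S, a c ≤ ∑ c ∈ T, a c + t := by
  classical
  have hexcess : ∑ c ∈ S, (a c - t) ≤ ∑ c ∈ T, (a c - t) :=
    calc ∑ c ∈ S, (a c - t) ≤ ∑ c ∈ S ∩ T, (a c - t) := by
          rw [← sum_inter_add_sum_sdiff S T, add_le_iff_nonpos_right]
          exact sum_nonpos fun c hc => sub_nonpos.2 (hout c (mem_sdiff.1 hc).2)
      _ ≤ ∑ c ∈ T, (a c - t) :=
          sum_le_sum_of_subset_of_nonneg inter_subset_right
            fun c hc _ => sub_nonneg.2 (hin c hc)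
  have hcard' : (#S : ℝ) * t ≤ (#T + 1) * t := by gcongr; exact_mod_cast hcard
  simp only [sum_sub_distrib, sum_const, nsmul_eq_mul] at hexcess
  linarith

end TopSets

lemma sq_sub_mul_mul_sub_le {e h m v : ℝ} (he₀ : 0 ≤ e) (he₁ : e ≤ 1) (hm : 0 ≤ m)
    (hmv : e * m ≤ v) (hlevel : 0 ≤ (m - v) * (2 * h - (1 + e) * m)) :
    (v - e * m) ^ 2 * (h - e * v) ≤ (1 - e) ^ 2 * v ^ 2 * (h - e * m) := by
  have hv : 0 ≤ v := (mul_nonneg he₀ hm).trans hmv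
  have hquad : 0 ≤ e * (v - m) ^ 2 * (2 * (v - e * m) + e * (1 - e) * m) := by
    have := sub_nonneg.2 hmv
    have := sub_nonneg.2 he₁
    positivity
  have hlin : 0 ≤ e * ((1 - e) * v + (v - e * m)) * ((m - v) * (2 * h - (1 + e) * m)) := by
    have := sub_nonneg.2 hmv
    have := sub_nonneg.2 he₁
    positivity
  linear_combination (hquad + hlin) / 2

-- For `m = 2 h / (1 + e)` the function `v ↦ (1 - e m / v)² (h - e v)` on `v ≥ e m` is maximal at
-- `v = m`. If this exceeds `w`, then for `m = w` the function is still increasing on `[e w, w]`.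
lemma exists_level {e h w : ℝ} (he : 0 ≤ e) (hw : 0 ≤ w) (hwh : e * w ≤ h) :
    ∃ m, 0 ≤ m ∧ m ≤ w ∧ ∀ v ≤ w, 0 ≤ (m - v) * (2 * h - (1 + e) * m) := by
  have hh : 0 ≤ h := (mul_nonneg he hw).trans hwh
  refine ⟨min (2 * h / (1 + e)) w, le_min (by positivity) hw, min_le_right _ _, fun v hv => ?_⟩
  rcases le_total (2 * h / (1 + e)) w with hle | hle
  · rw [min_eq_left hle, mul_div_cancel₀ _ (by positivity), sub_self, mul_zero]
  · rw [min_eq_right hle]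
    rw [le_div_iff₀ (by positivity)] at hle
    exact mul_nonneg (by linarith) (by linarith)

lemma mul_sq_sub_min_div_le {α e h m r v : ℝ} (he₀ : 0 ≤ e) (he₁ : e ≤ 1) (hm : 0 ≤ m)
    (hv : 0 < v) (hα : 0 < α) (hmh : e * m ≤ h)
    (hlevel : 0 ≤ (m - v) * (2 * h - (1 + e) * m))
    (hbound : (1 - e) ^ 2 * r * v ≤ (h - e * v) * α) :
    r * ((v - min (e * m) v) ^ 2 / v) ≤ (h - e * m) * α := by
  rcases le_or_gt v (e * m) with hvm | hmv
  · rw [min_eq_right hvm]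
    simpa using mul_nonneg (sub_nonneg.2 hmh) hα.le
  have he : e < 1 := by
    refine he₁.lt_of_ne fun he => ?_
    subst he
    have hvh : 0 ≤ h - 1 * v := nonneg_of_mul_nonneg_left (by simpa using hbound) hα
    exact hlevel.not_gt (mul_neg_of_neg_of_pos (by linarith) (by linarith))
  have hδ : 0 < 1 - e := sub_pos.2 he
  have hscaled : (1 - e) ^ 2 * v ^ 2 * (r * ((v - e * m) ^ 2 / v)) ≤
      (1 - e) ^ 2 * v ^ 2 * ((h - e * m) * α) :=
    calc (1 - e) ^ 2 * v ^ 2 * (r * ((v - e * m) ^ 2 / v))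
        = (v - e * m) ^ 2 * ((1 - e) ^ 2 * r * v) := by field_simp
      _ ≤ (v - e * m) ^ 2 * ((h - e * v) * α) := by gcongr
      _ = (v - e * m) ^ 2 * (h - e * v) * α := by ring
      _ ≤ (1 - e) ^ 2 * v ^ 2 * (h - e * m) * α :=
          mul_le_mul_of_nonneg_right (sq_sub_mul_mul_sub_le he₀ he₁ hm hmv.le hlevel) hα.le
      _ = _ := by ring
  rw [min_eq_left hmv.le]
  exact le_of_mul_le_mul_left hscaled (by positivity)

section TopThreshold

variable {ι : Type*} [DecidableEq ι] {T : Finset ι} {v : ι → ℝ} {e m : ℝ}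

/-- The thresholds of player X relative to a set `T` of most valuable contests: proportional to the
values on `T`, and at the constant level `e * m` off `T`, truncated so that no threshold exceeds
the value of its contest. -/
def topThreshold (T : Finset ι) (v : ι → ℝ) (e m : ℝ) (c : ι) : ℝ :=
  if c ∈ T then e * v c else min (e * m) (v c)

lemma topThreshold_of_mem {c : ι} (hc : c ∈ T) : topThreshold T v e m c = e * v c := if_pos hc

lemma topThreshold_of_notMem {c : ι} (hc : c ∉ T) :
    topThreshold T v e m c = min (e * m) (v c) := if_neg hc

lemma topThreshold_nonneg (he : 0 ≤ e) (hm : 0 ≤ m) (hv : ∀ c, 0 ≤ v c) (c : ι) :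
    0 ≤ topThreshold T v e m c := by
  unfold topThreshold
  split_ifs
  · exact mul_nonneg he (hv c)
  · exact le_min (mul_nonneg he hm) (hv c)

lemma topThreshold_le (he : e ≤ 1) (hv : ∀ c, 0 ≤ v c) (c : ι) :
    topThreshold T v e m c ≤ v c := by
  unfold topThreshold
  split_ifs
  · exact mul_le_of_le_one_left (hv c) he
  · exact min_le_right _ _

lemma sum_topThreshold_le (he : 0 ≤ e) (hm : 0 ≤ m) (hmv : ∀ c ∈ T, m ≤ v c) {S : Finset ι}
    (hcard : #S ≤ #T + 1) :
    ∑ c ∈ S, topThreshold T v e m c ≤ e * ∑ c ∈ T, v c + e * m := by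
  have hT : ∑ c ∈ T, topThreshold T v e m c = e * ∑ c ∈ T, v c := by
    rw [mul_sum]
    exact sum_congr rfl fun c hc => topThreshold_of_mem hc
  rw [← hT]
  refine sum_le_sum_add_of_card_le (mul_nonneg he hm) (fun c hc => ?_) (fun c hc => ?_) hcard
  · rw [topThreshold_of_mem hc]
    exact mul_le_mul_of_nonneg_left (hmv c hc) he
  · rw [topThreshold_of_notMem hc]
    exact min_le_left _ _

lemma mul_sum_sq_sub_topThreshold_div_le [Fintype ι] {α : ι → ℝ} {h r : ℝ} (hv : ∀ c, 0 < v c)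
    (hα : ∀ c, 0 < α c) (hα₁ : ∑ c, α c ≤ 1) (he₀ : 0 ≤ e) (he₁ : e ≤ 1) (hm : 0 ≤ m)
    (hmh : e * m ≤ h) (hlevel : ∀ c ∉ T, 0 ≤ (m - v c) * (2 * h - (1 + e) * m))
    (hin : ∀ c ∈ T, (1 - e) ^ 2 * r * v c ≤ (h - e * m) * α c)
    (hout : ∀ c ∉ T, (1 - e) ^ 2 * r * v c ≤ (h - e * v c) * α c) :
    r * ∑ c, (v c - topThreshold T v e m c) ^ 2 / v c ≤ h - e * m := by
  have hterm (c : ι) :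
      r * ((v c - topThreshold T v e m c) ^ 2 / v c) ≤ (h - e * m) * α c := by
    have hvc := hv c
    by_cases hc : c ∈ T
    · rw [topThreshold_of_mem hc]
      calc r * ((v c - e * v c) ^ 2 / v c) = (1 - e) ^ 2 * r * v c := by field_simp
        _ ≤ _ := hin c hc
    · rw [topThreshold_of_notMem hc]
      exact mul_sq_sub_min_div_le he₀ he₁ hm hvc (hα c) hmh (hlevel c hc) (hout c hc)
  calc r * ∑ c, (v c - topThreshold T v e m c) ^ 2 / v c
      ≤ ∑ c, (h - e * m) * α c := by rw [mul_sum]; exact sum_le_sum fun c _ => hterm c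
    _ = (h - e * m) * ∑ c, α c := (mul_sum ..).symm
    _ ≤ h - e * m := mul_le_of_le_one_right (sub_nonneg.2 hmh) hα₁

end TopThreshold

lemma exists_thresholds {ι : Type*} [Fintype ι] {v α : ι → ℝ} {e H r : ℝ} {k : ℕ}
    (hv : ∀ c, 0 < v c) (hα : ∀ c, 0 < α c) (hα₁ : ∑ c, α c ≤ 1) (he₀ : 0 ≤ e) (he₁ : e ≤ 1)
    (hr : 0 ≤ r) (hk : k < Fintype.card ι)
    (hH : ∀ S : Finset ι, #S = k + 1 → ∀ c ∈ S,
      e * ∑ i ∈ S, v i + (1 - e) ^ 2 * r * (v c / α c) ≤ H) :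
    ∃ (a : ι → ℝ) (A : ℝ), (∀ c, 0 ≤ a c) ∧ (∀ c, a c ≤ v c) ∧
      (∀ S : Finset ι, #S ≤ k + 1 → ∑ c ∈ S, a c ≤ A) ∧
      A + r * ∑ c, (v c - a c) ^ 2 / v c ≤ H := by
  classical
  obtain ⟨T, rfl, κ, hκ, htop, hrest⟩ := exists_finset_card_eq_forall_le v hk
  let h := H - e * ∑ c ∈ T, v c
  have hinsert (i : ι) (hi : i ∉ T) (c : ι) (hc : c ∈ insert i T) :
      (1 - e) ^ 2 * r * v c ≤ (h - e * v i) * α c := by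
    have hHc := hH (insert i T) (card_insert_of_notMem hi) c hc
    rw [sum_insert hi] at hHc
    rw [← div_le_iff₀ (hα c), mul_div_assoc]
    simp only [h]
    linarith
  have hκh : e * v κ ≤ h := by
    have hprod : 0 ≤ (h - e * v κ) * α κ :=
      (mul_nonneg (by positivity) (hv κ).le).trans (hinsert κ hκ κ (mem_insert_self κ T))
    exact sub_nonneg.1 (nonneg_of_mul_nonneg_left hprod (hα κ))
  obtain ⟨m, hm, hmκ, hlevel⟩ := exists_level he₀ (hv κ).le hκh
  have hmκ' : e * m ≤ e * v κ := mul_le_mul_of_nonneg_left hmκ he₀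
  have hcost := mul_sum_sq_sub_topThreshold_div_le (T := T) hv hα hα₁ he₀ he₁ hm
    (hmκ'.trans hκh) (fun c hc => hlevel (v c) (hrest c hc))
    (fun c hc => (hinsert κ hκ c (mem_insert_of_mem hc)).trans
      (mul_le_mul_of_nonneg_right (by linarith) (hα c).le))
    (fun c hc => hinsert c hc c (mem_insert_self c T))
  refine ⟨topThreshold T v e m, e * ∑ c ∈ T, v c + e * m,
    topThreshold_nonneg he₀ hm fun c => (hv c).le, topThreshold_le he₁ fun c => (hv c).le,
    fun S hS => sum_topThreshold_le he₀ hm (fun c hc => hmκ.trans (htop c hc)) hS, ?_⟩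
  simp only [h] at hcost
  linarith

/-- in the generalized restricted game `RL^K(X,Y;v)`, for any `α ∈ Δ` with
strictly positive coordinates and any `δ ∈ [0,1]`, the max-min value of player X is at least
`1 − max_{|S| = K} H_S(α,δ)`, where
`H_S(α,δ) = (Σ_{c∈S} v_c)(1−δ) + δ²·(Y/(2X))·max_{c∈S} v_c/α_c`. -/
theorem RLK_maxmin_lower_bound (C : ℕ) (hC : 0 < C) (v : Fin C → ℝ)
    (hpos : ∀ c, 0 < v c) (hsum : ∑ c, v c = 1)
    (X Y : ℝ) (hX : 0 < X) (hY : 0 < Y) (K : ℕ) (hK1 : 1 ≤ K) (hK2 : K ≤ C)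
    (α : Fin C → ℝ) (hα : α ∈ stdSimplex ℝ (Fin C)) (hαpos : ∀ c, 0 < α c)
    (δ : ℝ) (hδ : δ ∈ Set.Icc (0 : ℝ) 1) :
    1 - (⨆ S : {S : Finset (Fin C) // S.card = K},
          ((∑ c ∈ S.1, v c) * (1 - δ) +
            δ ^ 2 * (Y / (2 * X)) * (⨆ c ∈ S.1, v c / α c))) ≤
      ⨆ F : Strat C X, ⨅ G : StratK C K Y, payoff C v F.1 G.1 := by
  obtain ⟨k, rfl⟩ := Nat.exists_eq_succ_of_ne_zero (Nat.pos_iff_ne_zero.1 hK1)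
  obtain ⟨hδ₀, hδ₁⟩ := hδ
  set H : {S : Finset (Fin C) // #S = k + 1} → ℝ := fun S =>
    (∑ c ∈ S.1, v c) * (1 - δ) + δ ^ 2 * (Y / (2 * X)) * ⨆ c ∈ S.1, v c / α c
  have hH (S : Finset (Fin C)) (hS : #S = k + 1) (c : Fin C) (hc : c ∈ S) :
      (1 - δ) * ∑ i ∈ S, v i + (1 - (1 - δ)) ^ 2 * (Y / (2 * X)) * (v c / α c) ≤ ⨆ S, H S := by
    refine le_ciSup_of_le (Set.finite_range H).bddAbove ⟨S, hS⟩ ?_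
    have hratio : v c / α c ≤ ⨆ c ∈ S, v c / α c :=
      le_ciSup₂ (f := fun c (_ : c ∈ S) => v c / α c) (Set.toFinite _).bddAbove c hc
    rw [sub_sub_cancel, mul_comm (1 - δ)]
    simp only [H]
    gcongr
  obtain ⟨a, A, ha, hav, hA, hAH⟩ := exists_thresholds hpos hαpos hα.2.le (sub_nonneg.2 hδ₁)
    (sub_le_self 1 hδ₀) (by positivity) (by simpa using hK2) hH
  have hvalue : 1 - (A + Y / (2 * X) * ∑ c, (v c - a c) ^ 2 / v c) ≤
      maxminValue (k + 1) v X Y :=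
    hsum ▸ sub_add_sum_sq_le_maxminValue hpos ha hav hX hY.le hA
  exact (sub_le_sub_left hAH 1).trans hvalue
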